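/- arXiv:0708.1113 — 3 statements merged into one kernel-verified Lean document; each statement's English description precedes it below -/
import Mathlib

section
/- Let F be an algebraically closed field of characteristic 0, and let sl₃(F) denote the Lie algebra of traceless 3×3 matrices over F with bracket [X,Y] = XY − YX. Let 𝔧 be a Lie subalgebra of sl₃(F) (an F-linear subspace closed under the bracket) that contains the elementary matrix E₁₃ (the matrix with entry 1 in position (1,3) and 0 elsewhere), and suppose 𝔧 ≠ sl₃(F). Then there exists an F-linear subspace W of F³ with W ≠ 0 and W ≠ F³ such that X·w ∈ W for every X ∈ 𝔧 and every w ∈ W (matrix acting on column vectors). -/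
set_option linter.unusedSimpArgs false
set_option maxHeartbeats 4000000 in
/-- Case analysis for a subalgebra containing `E₁₃`, `diag(1,0,-1)` and an element with nonzero
`(3,1)` entry. -/
theorem sl3_aux_graded
    (F : Type*) [Field F] [CharZero F]
    (J : Submodule F (Matrix (Fin 3) (Fin 3) F))
    (hbr : ∀ X ∈ J, ∀ Y ∈ J, X * Y - Y * X ∈ J)
    (hE : !![0, 0, 1; 0, 0, 0; 0, 0, (0 : F)] ∈ J)
    (hH : !![1, 0, 0; 0, 0, 0; 0, 0, (-1 : F)] ∈ J)
    (hY : ∃ Y ∈ J, Y 2 0 ≠ 0)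
    (hproper : ∃ X : Matrix (Fin 3) (Fin 3) F, Matrix.trace X = 0 ∧ X ∉ J) :
    ∃ W : Submodule F (Fin 3 → F), W ≠ ⊥ ∧ W ≠ ⊤ ∧
      ∀ X ∈ J, ∀ w ∈ W, X.mulVec w ∈ W := by
  have had : ∀ Z ∈ J, !![0, Z 0 1, 2 * Z 0 2; - Z 1 0, 0, Z 1 2; -2 * Z 2 0, - Z 2 1, 0] ∈ J := by
    intro Z hZ
    convert hbr _ hH _ hZ using 1
    ext i j
    fin_cases i <;> fin_cases j <;> simp [Matrix.mul_apply, Matrix.vecMul, dotProduct, Fin.sum_univ_three] <;> ring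
  have hE31 : !![0, 0, 0; 0, 0, 0; 1, 0, (0 : F)] ∈ J := by
    obtain ⟨Y, hY, h0⟩ := hY
    have h2 := had _ (had _ hY)
    have h4 := had _ (had _ h2)
    convert J.smul_mem (Y 2 0)⁻¹ (J.sub_mem (J.smul_mem (12 : F)⁻¹ (J.sub_mem h4 h2))
      (J.smul_mem (Y 0 2) hE)) using 1
    ext i j
    fin_cases i <;> fin_cases j <;> simp [h0]
    all_goals try field_simp
    all_goals try ring
  have hW1 : ∀ Z ∈ J, !![0, Z 0 1, 0; 0, 0, Z 1 2; 0, 0, 0] ∈ J ∧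
      !![0, 0, 0; Z 1 0, 0, 0; 0, Z 2 1, 0] ∈ J := by
    intro Z hZ
    have h1 := had _ hZ
    have h2 := had _ h1
    have hA := J.sub_mem (J.add_mem h1 (J.smul_mem (2 * Z 2 0) hE31)) (J.smul_mem (2 * Z 0 2) hE)
    have hB := J.sub_mem (J.sub_mem h2 (J.smul_mem (4 * Z 2 0) hE31)) (J.smul_mem (4 * Z 0 2) hE)
    constructor
    · convert J.smul_mem (2 : F)⁻¹ (J.add_mem hB hA) using 1
      ext i j
      fin_cases i <;> fin_cases j <;> simp <;> ring
    · convert J.smul_mem (2 : F)⁻¹ (J.sub_mem hB hA) using 1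
      ext i j
      fin_cases i <;> fin_cases j <;> simp <;> ring
  have hW2 : ∀ Z ∈ J, !![0, Z 2 1, 0; 0, 0, - Z 1 0; 0, 0, 0] ∈ J := by
    intro Z hZ
    convert hbr _ hE _ (hW1 Z hZ).2 using 1
    ext i j
    fin_cases i <;> fin_cases j <;> simp [Matrix.mul_apply, Matrix.vecMul, dotProduct, Fin.sum_univ_three]
  have hA : ¬ (!![0, 1, 0; 0, 0, 0; 0, 0, (0 : F)] ∈ J ∧ !![0, 0, 0; 0, 0, 1; 0, 0, (0 : F)] ∈ J) := by
    rintro ⟨h12, h23⟩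
    obtain ⟨X, hX, hXJ⟩ := hproper
    apply hXJ
    have h32 := hbr _ hE31 _ h12
    have h21 := hbr _ h23 _ hE31
    have hD := hbr _ h12 _ h21
    have ht : X 1 1 = - X 0 0 - X 2 2 := by
      rw [Matrix.trace_fin_three] at hX
      linear_combination hX
    convert J.add_mem (J.add_mem (J.add_mem (J.smul_mem (X 0 1) h12) (J.smul_mem (X 1 2) h23))
      (J.add_mem (J.smul_mem (X 2 1) h32) (J.smul_mem (X 1 0) h21)))
      (J.add_mem (J.add_mem (J.smul_mem (X 0 2) hE) (J.smul_mem (X 2 0) hE31))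
      (J.add_mem (J.smul_mem (X 0 0 + X 2 2) hD) (J.smul_mem (- X 2 2) hH))) using 1
    ext i j
    fin_cases i <;> fin_cases j <;> simp [Matrix.mul_apply, Matrix.vecMul, dotProduct, Fin.sum_univ_three, ht]
    all_goals try ring
  have hab : ∀ a b : F, !![0, a, 0; 0, 0, b; 0, 0, 0] ∈ J → a = 0 ∨ b = 0 := by
    intro a b h
    by_contra! hc
    obtain ⟨ha, hb⟩ := hc
    have h' : !![0, 0, 0; -b, 0, 0; 0, a, 0] ∈ J := by
      convert hbr _ hE31 _ h using 1
      ext i j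
      fin_cases i <;> fin_cases j <;> simp [Matrix.mul_apply, Matrix.vecMul, dotProduct, Fin.sum_univ_three]
      all_goals try ring
    have hD : !![-(a * b), 0, 0; 0, 2 * a * b, 0; 0, 0, -(a * b)] ∈ J := by
      convert hbr _ h _ h' using 1
      ext i j
      fin_cases i <;> fin_cases j <;> simp [Matrix.mul_apply, Matrix.vecMul, dotProduct, Fin.sum_univ_three]
      all_goals try ring
    have h3 : !![0, -(3 * a ^ 2 * b), 0; 0, 0, 3 * a * b ^ 2; 0, 0, 0] ∈ J := by
      convert hbr _ hD _ h using 1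
      ext i j
      fin_cases i <;> fin_cases j <;> simp [Matrix.mul_apply, Matrix.vecMul, dotProduct, Fin.sum_univ_three]
      all_goals try ring
    apply hA
    constructor
    · convert J.smul_mem (6 * a ^ 2 * b)⁻¹ (J.sub_mem (J.smul_mem (3 * a * b) h) h3) using 1
      ext i j
      fin_cases i <;> fin_cases j <;> simp [Matrix.mul_apply, Matrix.vecMul, dotProduct, Fin.sum_univ_three, ha, hb]
      all_goals try field_simp
      all_goals try ring
    · convert J.smul_mem (6 * a * b ^ 2)⁻¹ (J.add_mem (J.smul_mem (3 * a * b) h) h3) using 1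
      ext i j
      fin_cases i <;> fin_cases j <;> simp [Matrix.mul_apply, Matrix.vecMul, dotProduct, Fin.sum_univ_three, ha, hb]
      all_goals try field_simp
      all_goals try ring
  by_cases h23 : !![0, 0, 0; 0, 0, 1; 0, 0, (0 : F)] ∈ J
  · have key : ∀ a b : F, !![0, a, 0; 0, 0, b; 0, 0, 0] ∈ J → a = 0 := by
      intro a b h
      by_contra ha
      apply hA
      refine ⟨?_, h23⟩
      convert J.smul_mem a⁻¹ (J.sub_mem h (J.smul_mem b h23)) using 1
      ext i j
      fin_cases i <;> fin_cases j <;> simp [ha]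
    refine ⟨{ carrier := {w | w 0 = 0 ∧ w 2 = 0}, add_mem' := ?_, zero_mem' := ?_, smul_mem' := ?_},
      ?_, ?_, ?_⟩
    · rintro a b ⟨h1, h2⟩ ⟨h3, h4⟩
      simp [h1, h2, h3, h4]
    · simp
    · rintro c a ⟨h1, h2⟩
      simp [h1, h2]
    · intro h
      have : (![0, 1, 0] : Fin 3 → F) ∈ (⊥ : Submodule F (Fin 3 → F)) := by
        rw [← h]; exact ⟨rfl, rfl⟩
      simpa using congrFun ((Submodule.mem_bot F).1 this) 1
    · intro h
      have : (![1, 0, 0] : Fin 3 → F) ∈ (⊤ : Submodule F (Fin 3 → F)) := trivial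
      rw [← h] at this
      simpa using this.1
    · rintro X hX w ⟨h1, h2⟩
      have e1 := key _ _ (hW1 X hX).1
      have e2 := key _ _ (hW2 X hX)
      constructor <;> simp [Matrix.mulVec, dotProduct, Fin.sum_univ_three, h1, h2, e1, e2]
  · have key : ∀ a b : F, !![0, a, 0; 0, 0, b; 0, 0, 0] ∈ J → b = 0 := by
      intro a b h
      by_contra hb
      have ha := (hab a b h).resolve_right hb
      apply h23
      convert J.smul_mem b⁻¹ h using 1
      ext i j
      fin_cases i <;> fin_cases j <;> simp [ha, hb]
    refine ⟨{ carrier := {w | w 1 = 0}, add_mem' := ?_, zero_mem' := ?_, smul_mem' := ?_},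
      ?_, ?_, ?_⟩
    · rintro a b h1 h2
      simp_all
    · simp
    · rintro c a h1
      simp_all
    · intro h
      have : (![1, 0, 0] : Fin 3 → F) ∈ (⊥ : Submodule F (Fin 3 → F)) := by
        rw [← h]; exact rfl
      simpa using congrFun ((Submodule.mem_bot F).1 this) 0
    · intro h
      have : (![0, 1, 0] : Fin 3 → F) ∈ (⊤ : Submodule F (Fin 3 → F)) := trivial
      rw [← h] at this
      change (1 : F) = 0 at this
      simp at this
    · intro X hX w h1
      have h1 : w 1 = 0 := h1
      have e1 := key _ _ (hW1 X hX).1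
      have e2 := key _ _ (hW2 X hX)
      change X.mulVec w 1 = 0
      rw [neg_eq_zero] at e2
      simp [Matrix.mulVec, dotProduct, Fin.sum_univ_three, h1, e1, e2]

/-- Either `J` is reducible, or it has an element with nonzero `(3,1)` entry. -/
theorem sl3_aux_corner
    (F : Type*) [Field F] [CharZero F]
    (J : Submodule F (Matrix (Fin 3) (Fin 3) F))
    (hbr : ∀ X ∈ J, ∀ Y ∈ J, X * Y - Y * X ∈ J)
    (hE : !![0, 0, 1; 0, 0, 0; 0, 0, (0 : F)] ∈ J)
    (hY : ∀ Y ∈ J, Y 2 0 = 0) :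
    ∃ W : Submodule F (Fin 3 → F), W ≠ ⊥ ∧ W ≠ ⊤ ∧
      ∀ X ∈ J, ∀ w ∈ W, X.mulVec w ∈ W := by
  have hZ : ∀ Z ∈ J, Z 1 0 = 0 ∨ Z 2 1 = 0 := by
    intro Z hZ
    have h0 := hY Z hZ
    have h4 := hY _ (hbr _ hZ _ (hbr _ hZ _ (hbr _ hZ _ (hbr _ hZ _ hE))))
    have : 6 * (Z 1 0 * Z 2 1) ^ 2 = 0 := by
      rw [← h4]
      simp [Matrix.mul_apply, Matrix.vecMul, dotProduct, Fin.sum_univ_three, h0]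
      ring
    simpa using this
  by_cases h1 : ∀ Z ∈ J, Z 1 0 = 0
  · refine ⟨{ carrier := {w | w 1 = 0 ∧ w 2 = 0}, add_mem' := ?_, zero_mem' := ?_, smul_mem' := ?_},
      ?_, ?_, ?_⟩
    · rintro a b ⟨h1, h2⟩ ⟨h3, h4⟩
      simp [h1, h2, h3, h4]
    · simp
    · rintro c a ⟨h1, h2⟩
      simp [h1, h2]
    · intro h
      have : (![1, 0, 0] : Fin 3 → F) ∈ (⊥ : Submodule F (Fin 3 → F)) := by
        rw [← h]; exact ⟨rfl, rfl⟩
      simpa using congrFun ((Submodule.mem_bot F).1 this) 0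
    · intro h
      have : (![0, 1, 0] : Fin 3 → F) ∈ (⊤ : Submodule F (Fin 3 → F)) := trivial
      rw [← h] at this
      simpa using this.1
    · rintro X hX w ⟨h2, h3⟩
      have e1 := h1 X hX
      have e2 := hY X hX
      constructor <;> simp [Matrix.mulVec, dotProduct, Fin.sum_univ_three, h2, h3, e1, e2]
  · have h2 : ∀ Z ∈ J, Z 2 1 = 0 := by
      push Not at h1
      obtain ⟨X, hX, hX0⟩ := h1
      intro Z hZJ
      by_contra hc
      have a1 := (hZ X hX).resolve_left hX0
      have a2 := (hZ Z hZJ).resolve_right hc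
      have a3 := hZ _ (J.add_mem hX hZJ)
      simp [a1, a2, hX0, hc] at a3
    refine ⟨{ carrier := {w | w 2 = 0}, add_mem' := ?_, zero_mem' := ?_, smul_mem' := ?_},
      ?_, ?_, ?_⟩
    · rintro a b h1 h2
      simp_all
    · simp
    · rintro c a h1
      simp_all
    · intro h
      have : (![1, 0, 0] : Fin 3 → F) ∈ (⊥ : Submodule F (Fin 3 → F)) := by
        rw [← h]; exact rfl
      simpa using congrFun ((Submodule.mem_bot F).1 this) 0
    · intro h
      have : (![0, 0, 1] : Fin 3 → F) ∈ (⊤ : Submodule F (Fin 3 → F)) := trivial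
      rw [← h] at this
      change (1 : F) = 0 at this
      simp at this
    · intro X hX w h3
      have h3 : w 2 = 0 := h3
      have e1 := h2 X hX
      have e2 := hY X hX
      change X.mulVec w 2 = 0
      simp [Matrix.mulVec, dotProduct, Fin.sum_univ_three, h3, e1, e2]

/-- Over an algebraically closed field of characteristic zero, any proper Lie
subalgebra of `sl₃` containing the rank-one nilpotent `E₁₃` acts reducibly on
`F³`, i.e. preserves a nontrivial proper subspace. -/
theorem proper_subalgebra_of_sl3_containing_E13_reducible
    (F : Type*) [Field F] [IsAlgClosed F] [CharZero F]
    (J : Submodule F (Matrix (Fin 3) (Fin 3) F))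
    (htr : ∀ X ∈ J, Matrix.trace X = 0)
    (hbr : ∀ X ∈ J, ∀ Y ∈ J, X * Y - Y * X ∈ J)
    (hE : Matrix.single (0 : Fin 3) (2 : Fin 3) (1 : F) ∈ J)
    (hproper : ∃ X : Matrix (Fin 3) (Fin 3) F, Matrix.trace X = 0 ∧ X ∉ J) :
    ∃ W : Submodule F (Fin 3 → F), W ≠ ⊥ ∧ W ≠ ⊤ ∧
      ∀ X ∈ J, ∀ w ∈ W, X.mulVec w ∈ W := by
  have hE' : !![0, 0, 1; 0, 0, 0; 0, 0, (0 : F)] ∈ J := by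
    convert hE using 1
    ext i j
    fin_cases i <;> fin_cases j <;> simp [Matrix.single]
  by_cases hY : ∀ Y ∈ J, Y 2 0 = 0
  · exact sl3_aux_corner F J hbr hE' hY
  push Not at hY
  obtain ⟨X0, hX0, hne⟩ := hY
  obtain ⟨X, hX, hX1⟩ : ∃ X ∈ J, X 2 0 = 1 :=
    ⟨(X0 2 0)⁻¹ • X0, J.smul_mem _ hX0, by simp [hne]⟩
  obtain ⟨p, r, hH⟩ : ∃ p r : F, !![1, p, p * r; 0, 0, r; 0, 0, -1] ∈ J := by
    refine ⟨X 2 1, - X 1 0, ?_⟩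
    convert J.add_mem (hbr _ hE' _ hX)
      (J.smul_mem (X 0 0 - X 2 2 - X 2 1 * X 1 0) hE') using 1
    ext i j
    fin_cases i <;> fin_cases j <;> simp [Matrix.mul_apply, Matrix.vecMul, dotProduct, Fin.sum_univ_three, hX1]
    all_goals try ring
  obtain ⟨P, hP⟩ : ∃ P : Matrix (Fin 3) (Fin 3) F, P = !![1, -p, 0; 0, 1, -r; 0, 0, 1] := ⟨_, rfl⟩
  obtain ⟨Q, hQ⟩ : ∃ Q : Matrix (Fin 3) (Fin 3) F, Q = !![1, p, p * r; 0, 1, r; 0, 0, 1] := ⟨_, rfl⟩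
  have hPQ : P * Q = 1 := by
    rw [hP, hQ]
    ext i j
    fin_cases i <;> fin_cases j <;> simp [Matrix.mul_apply, Matrix.vecMul, dotProduct, Fin.sum_univ_three]
  have hQP : Q * P = 1 := mul_eq_one_comm.1 hPQ
  let f : Matrix (Fin 3) (Fin 3) F →ₗ[F] Matrix (Fin 3) (Fin 3) F :=
    (LinearMap.mulLeft F P).comp (LinearMap.mulRight F Q)
  have hf : ∀ Y, f Y = P * (Y * Q) := fun Y => rfl
  have hfQ : ∀ Y, f (Q * Y * P) = Y := by
    intro Y
    rw [hf]
    calc P * (Q * Y * P * Q) = (P * Q) * Y * (P * Q) := by simp only [Matrix.mul_assoc]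
      _ = Y := by rw [hPQ]; simp
  have hfm : ∀ Y Z, f (Y * Z) = f Y * f Z := by
    intro Y Z
    simp only [hf]
    calc P * (Y * Z * Q) = P * Y * 1 * Z * Q := by simp only [Matrix.mul_assoc, Matrix.one_mul]
      _ = _ := by rw [← hQP]; simp only [Matrix.mul_assoc]
  obtain ⟨W, hW0, hW1, hW⟩ := sl3_aux_graded F (J.comap f)
    (by
      intro Y hY Z hZ
      rw [Submodule.mem_comap] at *
      rw [map_sub, hfm, hfm]
      exact hbr _ hY _ hZ)
    (by
      rw [Submodule.mem_comap, hf]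
      convert hE' using 1
      rw [hP, hQ]
      ext i j
      fin_cases i <;> fin_cases j <;> simp [Matrix.mul_apply, Matrix.vecMul, dotProduct, Fin.sum_univ_three])
    (by
      rw [Submodule.mem_comap, hf]
      convert hH using 1
      rw [hP, hQ]
      ext i j
      fin_cases i <;> fin_cases j <;> simp [Matrix.mul_apply, Matrix.vecMul, dotProduct, Fin.sum_univ_three])
    (by
      refine ⟨Q * X * P, ?_, ?_⟩
      · rw [Submodule.mem_comap, hfQ]
        exact hX
      · rw [hP, hQ]
        simp [Matrix.mul_apply, Matrix.vecMul, dotProduct, Fin.sum_univ_three, hX1])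
    (by
      obtain ⟨Z, hZ, hZJ⟩ := hproper
      refine ⟨Q * Z * P, ?_, ?_⟩
      · rw [Matrix.trace_mul_comm, ← Matrix.mul_assoc, hPQ, Matrix.one_mul, hZ]
      · rw [Submodule.mem_comap, hfQ]
        exact hZJ)
  have hPQv : ∀ v, P.mulVec (Q.mulVec v) = v := by intro v; simp [hPQ]
  have hQPv : ∀ v, Q.mulVec (P.mulVec v) = v := by intro v; simp [hQP]
  refine ⟨W.comap Q.mulVecLin, ?_, ?_, ?_⟩
  · intro h
    apply hW0
    rw [eq_bot_iff]
    intro w hw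
    have : P.mulVec w ∈ W.comap Q.mulVecLin := by
      rw [Submodule.mem_comap, Matrix.mulVecLin_apply, hQPv]
      exact hw
    rw [h, Submodule.mem_bot] at this
    rw [Submodule.mem_bot, ← hQPv w, this, Matrix.mulVec_zero]
  · intro h
    apply hW1
    rw [eq_top_iff]
    intro w _
    have : P.mulVec w ∈ W.comap Q.mulVecLin := by
      rw [h]; trivial
    rwa [Submodule.mem_comap, Matrix.mulVecLin_apply, hQPv] at this
  · intro Y hY w hw
    rw [Submodule.mem_comap, Matrix.mulVecLin_apply] at *
    have := hW (Q * Y * P) (by rw [Submodule.mem_comap, hfQ]; exact hY) _ hw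
    rwa [← Matrix.mulVec_mulVec, ← Matrix.mulVec_mulVec, hPQv] at this
end

section
/- Let p be a prime and let A be a finite-dimensional commutative reduced ℚ_p-algebra of dimension n ≥ 1, equipped with its natural topology as a finite-dimensional ℚ_p-vector space. Let O_A be the integral closure of ℤ_p in A, and let Λ be a subring of O_A containing the image of ℤ_p which is a compact open subset of A. Let μ be a Haar measure on the additive group of A. Then μ( { x ∈ Λ : there exists y ∈ Λ with x·y = 1 } ) ≥ (1 − n/p) · μ(Λ). -/
open MeasureTheory

lemma units_aux_poly (p : ℕ) [Fact p.Prime]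
    (A : Type*) [CommRing A] [Algebra ℚ_[p] A] [FiniteDimensional ℚ_[p] A] (x : A)
    (h : ∃ P : Polynomial ℚ_[p], P.Monic ∧ (∀ i, ‖P.coeff i‖ ≤ 1) ∧
      Polynomial.aeval x P = 0) :
    ∃ Q : Polynomial ℤ_[p], Q.Monic ∧ Q.natDegree ≤ Module.finrank ℚ_[p] A ∧
      Polynomial.aeval x (Q.map (algebraMap ℤ_[p] ℚ_[p])) = 0 := by
  obtain ⟨P, hPm, hPi, hPx⟩ := h
  have hx : IsIntegral ℚ_[p] x := Algebra.IsIntegral.isIntegral x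
  have hlift : P ∈ Polynomial.lifts (algebraMap ℤ_[p] ℚ_[p]) := by
    rw [Polynomial.lifts_iff_coeff_lifts]
    intro i
    exact ⟨⟨P.coeff i, hPi i⟩, rfl⟩
  obtain ⟨P', hP', -, hP'm⟩ := Polynomial.lifts_and_natDegree_eq_and_monic hlift hPm
  have hdvd : minpoly ℚ_[p] x ∣ P'.map (algebraMap ℤ_[p] ℚ_[p]) := by
    rw [hP']; exact minpoly.dvd _ _ hPx
  obtain ⟨Q, hQ⟩ := IsIntegrallyClosed.eq_map_mul_C_of_dvd ℚ_[p] hP'm hdvd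
  have hmm := minpoly.monic hx
  rw [hmm.leadingCoeff, Polynomial.C_1, mul_one] at hQ
  have hinj : Function.Injective (algebraMap ℤ_[p] ℚ_[p]) := IsFractionRing.injective _ _
  refine ⟨Q, ?_, ?_, ?_⟩
  · rw [← hQ] at hmm
    exact Polynomial.monic_of_injective hinj hmm
  · rw [← Polynomial.natDegree_map_eq_of_injective hinj, hQ]
    have h1 : minpoly ℚ_[p] x ∣ (Algebra.lmul ℚ_[p] A x).charpoly := by
      apply minpoly.dvd
      have := LinearMap.aeval_self_charpoly (Algebra.lmul ℚ_[p] A x)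
      rw [Polynomial.aeval_algHom_apply] at this
      exact Algebra.lmul_injective (R := ℚ_[p]) (this.trans (map_zero _).symm)
    have h2 := Polynomial.natDegree_le_of_dvd h1 (LinearMap.charpoly_monic _).ne_zero
    rwa [LinearMap.charpoly_natDegree] at h2
  · rw [hQ]; exact minpoly.aeval _ _

lemma units_aux_count (p : ℕ) [Fact p.Prime]
    (A : Type*) [CommRing A] [Algebra ℚ_[p] A] [FiniteDimensional ℚ_[p] A]
    (Λ : Subring A)
    (hΛZp : ∀ z : ℤ_[p], algebraMap ℚ_[p] A (z : ℚ_[p]) ∈ Λ) (x : A) (hxΛ : x ∈ Λ)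
    (h : ∃ P : Polynomial ℚ_[p], P.Monic ∧ (∀ i, ‖P.coeff i‖ ≤ 1) ∧
      Polynomial.aeval x P = 0) :
    ∃ S : Finset ℕ, S ⊆ Finset.range p ∧ p - Module.finrank ℚ_[p] A ≤ S.card ∧
      ∀ c ∈ S, x + (c : A) ∈ Λ ∧ ∃ y ∈ Λ, (x + (c : A)) * y = 1 := by
  classical
  obtain ⟨Q, hQm, hQd, hQx⟩ := units_aux_poly p A x h
  let T := (Finset.range p).filter
    (fun c : ℕ => PadicInt.toZMod (Q.eval (-(c : ℤ_[p]))) = 0)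
  have hT : T.card ≤ Module.finrank ℚ_[p] A := by
    have h0 : Q.map (PadicInt.toZMod (p := p)) ≠ 0 := (hQm.map _).ne_zero
    have : T.card ≤ (Q.map (PadicInt.toZMod (p := p))).roots.toFinset.card := by
      apply Finset.card_le_card_of_injOn (fun c : ℕ => -(c : ZMod p))
      · intro c hc
        have hc := (Finset.mem_filter.1 hc).2
        simp only [Finset.mem_coe, Multiset.mem_toFinset]
        rw [Polynomial.mem_roots h0, Polynomial.IsRoot.def]
        rw [← Polynomial.eval₂_hom] at hc
        rw [Polynomial.eval_map]
        simpa using hc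
      · intro a ha b hb hab
        have ha := Finset.mem_range.1 (Finset.mem_filter.1 ha).1
        have hb := Finset.mem_range.1 (Finset.mem_filter.1 hb).1
        have hab : (a : ZMod p) = b := neg_injective hab
        rw [ZMod.natCast_eq_natCast_iff'] at hab
        rwa [Nat.mod_eq_of_lt ha, Nat.mod_eq_of_lt hb] at hab
    calc T.card ≤ _ := this
      _ ≤ _ := Multiset.toFinset_card_le _
      _ ≤ _ := Polynomial.card_roots' _
      _ ≤ _ := Polynomial.natDegree_map_le
      _ ≤ _ := hQd
  refine ⟨Finset.range p \ T, Finset.sdiff_subset, ?_, ?_⟩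
  · rw [Finset.card_sdiff_of_subset (Finset.filter_subset _ _), Finset.card_range]
    exact Nat.sub_le_sub_left hT p
  · intro c hc
    refine ⟨Λ.add_mem hxΛ (natCast_mem Λ c), ?_⟩
    have hc' : PadicInt.toZMod (Q.eval (-(c : ℤ_[p]))) ≠ 0 := by
      intro h0
      rw [Finset.mem_sdiff] at hc
      exact hc.2 (Finset.mem_filter.2 ⟨hc.1, h0⟩)
    have hu : IsUnit (Q.eval (-(c : ℤ_[p]))) := by
      by_contra hnu
      apply hc'
      rw [← RingHom.mem_ker, PadicInt.ker_toZMod]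
      exact (IsLocalRing.mem_maximalIdeal _).2 hnu
    obtain ⟨u, hu⟩ := hu
    let φ : ℤ_[p] →+* A := (algebraMap ℚ_[p] A).comp (algebraMap ℤ_[p] ℚ_[p])
    have hφ : ∀ z, φ z ∈ Λ := hΛZp
    have hQx' : Q.eval₂ φ x = 0 := by
      rw [Polynomial.aeval_def, Polynomial.eval₂_map] at hQx
      exact hQx
    have hdiv := Polynomial.X_sub_C_mul_divByMonic_eq_sub_modByMonic Q (-(c : ℤ_[p]))
    rw [Polynomial.modByMonic_X_sub_C_eq_C_eval] at hdiv
    set R := Q /ₘ (Polynomial.X - Polynomial.C (-(c : ℤ_[p]))) with hR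
    have hev := congrArg (Polynomial.eval₂ φ x) hdiv
    rw [Polynomial.eval₂_mul, Polynomial.eval₂_sub, Polynomial.eval₂_sub, hQx',
      Polynomial.eval₂_C, Polynomial.eval₂_C, Polynomial.eval₂_X, map_neg, map_natCast,
      sub_neg_eq_add, ← hu, zero_sub] at hev
    refine ⟨- (φ (↑u⁻¹) * R.eval₂ φ x), Λ.neg_mem (Λ.mul_mem (hφ _) ?_), ?_⟩
    · rw [Polynomial.eval₂_eq_sum_range]
      exact Λ.sum_mem fun i _ => Λ.mul_mem (hφ _) (Λ.pow_mem hxΛ _)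
    · have h1 : φ u * φ (↑u⁻¹) = 1 := by rw [← map_mul]; simp
      linear_combination (-φ (↑u⁻¹)) * hev + h1

/-- Let `A` be an `n`-dimensional commutative reduced `ℚ_p`-algebra with its
natural topology, `Λ ⊆ A` a compact open subring contained in the integral
closure of `ℤ_p` and containing the image of `ℤ_p`, and `μ` a Haar measure on
the additive group of `A`. Then the set of units of `Λ` has measure at least
`(1 − n/p)·μ(Λ)`. -/
theorem haar_measure_units_of_order_ge
    (p : ℕ) [Fact p.Prime] (n : ℕ) (hn : 1 ≤ n)
    (A : Type*) [CommRing A] [Algebra ℚ_[p] A]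
    [TopologicalSpace A] [IsTopologicalRing A] [ContinuousSMul ℚ_[p] A] [T2Space A]
    [MeasurableSpace A] [BorelSpace A]
    (hred : ∀ a : A, IsNilpotent a → a = 0)
    (hdim : Module.finrank ℚ_[p] A = n)
    (Λ : Subring A)
    (hΛint : ∀ x ∈ Λ, ∃ P : Polynomial ℚ_[p], P.Monic ∧ (∀ i, ‖P.coeff i‖ ≤ 1) ∧
      Polynomial.aeval x P = 0)
    (hΛZp : ∀ z : ℤ_[p], algebraMap ℚ_[p] A (z : ℚ_[p]) ∈ Λ)
    (hΛcompact : IsCompact (Λ : Set A)) (hΛopen : IsOpen (Λ : Set A))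
    (μ : Measure A) [μ.IsAddHaarMeasure] :
    ENNReal.ofReal (1 - (n : ℝ) / p) * μ (Λ : Set A) ≤
      μ {x : A | x ∈ Λ ∧ ∃ y ∈ Λ, x * y = 1} := by
  classical
  haveI : FiniteDimensional ℚ_[p] A := Module.finite_of_finrank_pos (by omega)
  set U : Set A := {x : A | x ∈ Λ ∧ ∃ y ∈ Λ, x * y = 1} with hU
  set V := toMeasurable μ U with hV
  have hVm : MeasurableSet V := measurableSet_toMeasurable μ U
  have hUV : U ⊆ V := subset_toMeasurable μ U
  have hp0 : 0 < p := (Fact.out : p.Prime).pos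
  have key : ((p - n : ℕ) : ENNReal) * μ (Λ : Set A) ≤ p * μ U := by
    have h1 : ∫⁻ x, ∑ c ∈ Finset.range p, V.indicator (fun _ => (1 : ENNReal)) (x + (c : A)) ∂μ
        = p * μ U := by
      rw [lintegral_finsetSum]
      · simp_rw [lintegral_add_right_eq_self (μ := μ) (V.indicator (fun _ => (1 : ENNReal)))]
        simp [lintegral_indicator hVm, hV, measure_toMeasurable]
      · intro c _
        exact (measurable_const.indicator hVm).comp (measurable_add_const _)
    rw [← h1, ← lintegral_indicator_const hΛopen.measurableSet]
    apply lintegral_mono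
    intro x
    by_cases hx : x ∈ (Λ : Set A)
    · obtain ⟨S, hS, hSc, hSu⟩ := units_aux_count p A Λ hΛZp x hx (hΛint x hx)
      rw [hdim] at hSc
      simp only [Set.indicator_of_mem hx]
      calc ((p - n : ℕ) : ENNReal) ≤ (S.card : ENNReal) := by exact_mod_cast hSc
        _ = ∑ c ∈ S, V.indicator (fun _ => (1 : ENNReal)) (x + (c : A)) := by
          rw [Finset.sum_congr rfl (fun c hc => Set.indicator_of_mem (hUV (hSu c hc)) _)]
          simp
        _ ≤ _ := Finset.sum_le_sum_of_subset hS
    · simp [Set.indicator_of_notMem hx]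
  rcases le_total p n with hpn | hpn
  · have : 1 - (n : ℝ) / p ≤ 0 := by
      rw [sub_nonpos, le_div_iff₀ (by exact_mod_cast hp0)]
      simpa using hpn
    simp [ENNReal.ofReal_of_nonpos this]
  · have hp' : (0 : ℝ) < p := by exact_mod_cast hp0
    have he : ENNReal.ofReal (1 - (n : ℝ) / p) = ((p - n : ℕ) : ENNReal) / p := by
      have : 1 - (n : ℝ) / p = ((p - n : ℕ) : ℝ) / p := by
        rw [Nat.cast_sub hpn]; field_simp
      rw [this, ENNReal.ofReal_div_of_pos hp', ENNReal.ofReal_natCast, ENNReal.ofReal_natCast]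
    rw [he, div_eq_mul_inv, mul_right_comm, ← div_eq_mul_inv]
    exact ENNReal.div_le_of_le_mul' key
end

section
/- Let G be a compact metrizable abelian topological group. For each i ∈ ℕ let H_i be a closed subgroup of G, let m_i be the Haar probability measure of H_i viewed as a Borel probability measure on G, let g_i ∈ G, and let μ_i be the translate of m_i by g_i (the pushforward of m_i under x ↦ x·g_i). If the sequence (μ_i) converges, in the topology of weak convergence of Borel probability measures on G, to a probability measure μ, then there exist a closed subgroup H of G and an element g ∈ G such that μ is the translate by g of the Haar probability measure of H. -/
open MeasureTheory

theorem aux_translate_integral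
    {G : Type*} [TopologicalSpace G] [CompactSpace G]
    [TopologicalSpace.MetrizableSpace G] [CommGroup G] [IsTopologicalGroup G]
    [MeasurableSpace G] [BorelSpace G]
    {H : ℕ → Subgroup G} {M : ℕ → Measure G} (hprob : ∀ i, IsProbabilityMeasure (M i))
    (g : ℕ → G)
    (hfull : ∀ i, ∀ᵐ x ∂(M i), x * (g i)⁻¹ ∈ H i)
    (hinv : ∀ i, ∀ h ∈ H i, (M i).map (fun x => h * x) = M i)
    {μ : Measure G} [IsProbabilityMeasure μ]
    (hconv : ∀ f : C(G, ℝ),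
      Filter.Tendsto (fun i => ∫ x, f x ∂(M i)) Filter.atTop (nhds (∫ x, f x ∂μ)))
    {x y : G} (hx : x ∈ μ.support) (hy : y ∈ μ.support) (f : C(G, ℝ)) :
    ∫ z, f ((x * y⁻¹) * z) ∂μ = ∫ z, f z ∂μ := by
  have hint : ∀ (ν : Measure G) [IsProbabilityMeasure ν] (φ : C(G, ℝ)), Integrable φ ν := by
    intro ν _ φ
    exact φ.continuous.integrable_of_hasCompactSupport (HasCompactSupport.of_compactSpace φ)
  -- approximations of support points
  have happ : ∀ u ∈ μ.support, ∀ U ∈ nhds u, ∀ᶠ i in Filter.atTop,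
      ∃ v ∈ U, v * (g i)⁻¹ ∈ H i := by
    intro u hu U hU
    obtain ⟨V, hVU, hVo, huV⟩ := mem_nhds_iff.1 hU
    obtain ⟨φ, h0, h1, h01⟩ := exists_continuous_zero_one_of_isClosed
      (s := Vᶜ) (t := {u}) hVo.isClosed_compl isClosed_singleton
      (by simpa using huV)
    have hpos : 0 < ∫ z, φ z ∂μ := by
      rw [integral_pos_iff_support_of_nonneg (fun z => (h01 z).1) (hint μ φ)]
      refine (Measure.mem_support_iff_forall u).1 hu _ ?_
      refine φ.continuous.isOpen_support.mem_nhds ?_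
      have : φ u = 1 := h1 rfl
      simp [this]
    filter_upwards [(hconv φ).eventually (lt_mem_nhds hpos)] with i hi
    by_contra hcon
    push Not at hcon
    have : ∫ z, φ z ∂(M i) = 0 := by
      apply integral_eq_zero_of_ae
      filter_upwards [hfull i] with z hz
      apply h0
      intro hzV
      exact hcon z (hVU hzV) hz
    linarith
  set k := x * y⁻¹ with hk
  let F : G → C(G, ℝ) := fun a => f.comp ⟨fun z => a * z, by fun_prop⟩
  have hF : Continuous F := by
    refine ContinuousMap.continuous_of_continuous_uncurry F ?_
    change Continuous (fun p : G × G => f (p.1 * p.2))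
    fun_prop
  have key : ∀ ε > 0, |∫ z, F k z ∂μ - ∫ z, f z ∂μ| ≤ ε := by
    intro ε hε
    have hW : {p : G × G | dist (F (p.1 * p.2⁻¹)) (F k) < ε} ∈ nhds (x, y) := by
      have : Continuous (fun p : G × G => dist (F (p.1 * p.2⁻¹)) (F k)) :=
        (hF.comp (by fun_prop : Continuous fun p : G × G => p.1 * p.2⁻¹)).dist continuous_const
      refine (isOpen_lt this continuous_const).mem_nhds ?_
      change dist (F k) (F k) < ε
      rw [dist_self]
      exact hε
    rw [nhds_prod_eq, Filter.mem_prod_iff] at hW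
    obtain ⟨U, hU, V, hV, hUV⟩ := hW
    have hlim : Filter.Tendsto (fun i => |∫ z, F k z ∂(M i) - ∫ z, f z ∂(M i)|) Filter.atTop
        (nhds |∫ z, F k z ∂μ - ∫ z, f z ∂μ|) :=
      Filter.Tendsto.abs (Filter.Tendsto.sub (hconv (F k)) (hconv f))
    refine le_of_tendsto hlim ?_
    filter_upwards [happ x hx U hU, happ y hy V hV] with i ⟨u, huU, hu⟩ ⟨v, hvV, hv⟩
    have hd : dist (F (u * v⁻¹)) (F k) < ε := by
      have h2 : (u, v) ∈ U ×ˢ V := ⟨huU, hvV⟩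
      have h1 := hUV h2
      rw [Set.mem_setOf_eq] at h1
      exact h1
    have hmem : u * v⁻¹ ∈ H i := by
      have := (H i).mul_mem hu ((H i).inv_mem hv)
      simpa using this
    have he : ∫ z, f z ∂(M i) = ∫ z, F (u * v⁻¹) z ∂(M i) := by
      conv_lhs => rw [← hinv i _ hmem]
      rw [integral_map (by fun_prop) (by exact f.continuous.aestronglyMeasurable)]
      rfl
    have := hprob i
    rw [he, ← integral_sub (hint _ _) (hint _ _)]
    have := norm_integral_le_of_norm_le_const (μ := M i) (f := fun z => F k z - F (u * v⁻¹) z)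
      (C := ε) (Filter.Eventually.of_forall fun z => by
        rw [← dist_eq_norm, dist_comm]
        exact (ContinuousMap.dist_apply_le_dist z).trans hd.le)
    simpa using this
  have h0 : |∫ z, F k z ∂μ - ∫ z, f z ∂μ| ≤ 0 := le_of_forall_pos_le_add (by simpa using key)
  exact sub_eq_zero.1 (abs_nonpos_iff.1 h0)


/-- On a compact metrizable abelian topological group, a weak limit of
translates of Haar probability measures of closed subgroups is again a
translate of the Haar probability measure of a closed subgroup. Here "the Haar
probability measure of a closed subgroup `H`, viewed on `G`" is characterized
as a Borel probability measure giving `H` full mass and invariant under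
translation by every element of `H`. -/
theorem weak_limit_of_translated_haar_is_translated_haar
    (G : Type*) [TopologicalSpace G] [CompactSpace G]
    [TopologicalSpace.MetrizableSpace G] [CommGroup G] [IsTopologicalGroup G]
    [MeasurableSpace G] [BorelSpace G]
    (H : ℕ → Subgroup G) (hHclosed : ∀ i, IsClosed (H i : Set G))
    (m : ℕ → Measure G) (hprob : ∀ i, IsProbabilityMeasure (m i))
    (hfull : ∀ i, m i (H i : Set G) = 1)
    (hinv : ∀ i, ∀ h ∈ H i, (m i).map (fun x => h * x) = m i)
    (g : ℕ → G)
    (μ : Measure G) [IsProbabilityMeasure μ]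
    (hconv : ∀ f : C(G, ℝ),
      Filter.Tendsto (fun i => ∫ x, f x ∂((m i).map (fun x => x * g i)))
        Filter.atTop (nhds (∫ x, f x ∂μ))) :
    ∃ (Hlim : Subgroup G) (glim : G) (ν : Measure G),
      IsClosed (Hlim : Set G) ∧ IsProbabilityMeasure ν ∧
      ν (Hlim : Set G) = 1 ∧ (∀ h ∈ Hlim, ν.map (fun x => h * x) = ν) ∧
      μ = ν.map (fun x => x * glim) := by

  letI := TopologicalSpace.metrizableSpaceMetric G
  have hmeas : ∀ a : G, Measurable (fun x : G => a * x) := fun a => by fun_prop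
  have hmeas' : ∀ a : G, Measurable (fun x : G => x * a) := fun a => by fun_prop
  have hprob' : ∀ i, IsProbabilityMeasure ((m i).map (fun x => x * g i)) := fun i =>
    Measure.isProbabilityMeasure_map (hmeas' _).aemeasurable
  have hfull' : ∀ i, ∀ᵐ x ∂((m i).map (fun x => x * g i)), x * (g i)⁻¹ ∈ H i := by
    intro i
    have hms : MeasurableSet {x : G | x * (g i)⁻¹ ∈ H i} :=
      (hmeas' (g i)⁻¹) (hHclosed i).measurableSet
    rw [ae_map_iff (hmeas' _).aemeasurable hms]
    have : ∀ᵐ x ∂(m i), x ∈ (H i : Set G) :=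
      (mem_ae_iff_prob_eq_one (hHclosed i).measurableSet).2 (hfull i)
    filter_upwards [this] with z hz
    simpa using hz
  have hinv' : ∀ i, ∀ h ∈ H i, ((m i).map (fun x => x * g i)).map (fun x => h * x)
      = (m i).map (fun x => x * g i) := by
    intro i h hh
    conv_rhs => rw [← hinv i h hh]
    rw [Measure.map_map (hmeas _) (hmeas' _), Measure.map_map (hmeas' _) (hmeas _)]
    congr 1
    ext z
    simp [mul_assoc]
  have hsupp : μ.support ∈ ae μ := Measure.support_mem_ae
  obtain ⟨y, hy⟩ : μ.support.Nonempty := Filter.nonempty_of_mem hsupp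
  let K : Subgroup G :=
    { carrier := {k | ∀ f : C(G, ℝ), ∫ z, f (k * z) ∂μ = ∫ z, f z ∂μ}
      one_mem' := by intro f; simp
      mul_mem' := by
        intro a b ha hb f
        have := hb (f.comp ⟨fun z => a * z, by fun_prop⟩)
        simp only [ContinuousMap.comp_apply, ContinuousMap.coe_mk] at this
        rw [← ha f, ← this]
        simp [mul_assoc]
      inv_mem' := by
        intro a ha f
        have := ha (f.comp ⟨fun z => a⁻¹ * z, by fun_prop⟩)
        simp only [ContinuousMap.comp_apply, ContinuousMap.coe_mk] at this
        rw [← this]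
        simp }
  have hKmem : ∀ k, k ∈ K ↔ ∀ f : C(G, ℝ), ∫ z, f (k * z) ∂μ = ∫ z, f z ∂μ := fun k => Iff.rfl
  have hKcl : IsClosed (K : Set G) := by
    have : (K : Set G) = ⋂ f : C(G, ℝ), {k | ∫ z, f (k * z) ∂μ = ∫ z, f z ∂μ} := by
      ext k
      simp [hKmem]
    rw [this]
    refine isClosed_iInter fun f => isClosed_eq ?_ continuous_const
    refine continuous_of_dominated (bound := fun _ => ‖f‖) ?_ ?_ (integrable_const _) ?_
    · intro k
      exact (by fun_prop : Continuous fun z => f (k * z)).aestronglyMeasurable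
    · intro k
      exact Filter.Eventually.of_forall fun z => f.norm_coe_le_norm _
    · exact Filter.Eventually.of_forall fun z => by fun_prop
  have hKinv : ∀ k ∈ K, μ.map (fun x => k * x) = μ := by
    intro k hk
    have : IsProbabilityMeasure (μ.map (fun x => k * x)) :=
      Measure.isProbabilityMeasure_map (hmeas k).aemeasurable
    apply ext_of_forall_integral_eq_of_IsFiniteMeasure
    intro f
    rw [integral_map (hmeas k).aemeasurable (by exact f.continuous.aestronglyMeasurable)]
    exact hk f.toContinuousMap
  have hν : IsProbabilityMeasure (μ.map (fun x => x * y⁻¹)) :=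
    Measure.isProbabilityMeasure_map (hmeas' _).aemeasurable
  refine ⟨K, y, μ.map (fun x => x * y⁻¹), hKcl, hν, ?_, ?_, ?_⟩
  · rw [← mem_ae_iff_prob_eq_one hKcl.measurableSet]
    refine (ae_map_iff (p := fun x => x ∈ K) (hmeas' _).aemeasurable hKcl.measurableSet).2 ?_
    filter_upwards [hsupp] with x hx
    exact aux_translate_integral hprob' g hfull' hinv' hconv hx hy
  · intro h hh
    conv_rhs => rw [← hKinv h hh]
    rw [Measure.map_map (hmeas _) (hmeas' _), Measure.map_map (hmeas' _) (hmeas _)]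
    congr 1
    ext z
    simp [mul_assoc]
  · rw [Measure.map_map (hmeas' _) (hmeas' _)]
    have : ((fun x : G => x * y) ∘ fun x => x * y⁻¹) = id := by
      ext z
      simp
    rw [this, Measure.map_id]
end
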